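/- arXiv:1805.11410 — 2 statements merged into one kernel-verified Lean document; each statement's English description precedes it below -/
import Mathlib

section
/- Let x₀ > 0 and t ∈ ℂ with Re(1/(4t)) > 0. Then lim_{ε→0⁺} ∫₀^∞ exp(−x²/(4t))·(Log(x₀ − x − iε) − Log(x₀ − x + iε)) dx = −2πi·∫_{x₀}^∞ exp(−x²/(4t)) dx, where Log denotes the principal branch of the complex logarithm. -/
open MeasureTheory Filter

/-!
For `ε > 0` the points `u ± iε` are conjugate and off the cut, so
`Log (u - iε) - Log (u + iε) = -2i · arg (u + iε)`. As `ε → 0⁺` the argument stays in `[0, π]` and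
tends to `π` for `u < 0` and to `0` for `u > 0`, hence the jump is bounded by `2π` and converges
to `-2πi` times a Heaviside step. Dominated convergence then applies against any integrable weight.
-/

open scoped ComplexConjugate Topology

lemma log_conj_sub_log {z : ℂ} (hz : z.arg ≠ Real.pi) :
    Complex.log (conj z) - Complex.log z = -2 * z.arg * Complex.I := by
  rw [Complex.log_conj z hz, ← neg_sub, Complex.sub_conj, Complex.log_im]
  push_cast
  ring

lemma tendsto_arg_add_mul_I_of_neg {u : ℝ} (hu : u < 0) :
    Tendsto (fun ε : ℝ => (u + ε * Complex.I : ℂ).arg) (𝓝[≥] 0) (𝓝 Real.pi) := by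
  have tendsto_add : Tendsto (fun ε : ℝ => (u + ε * Complex.I : ℂ)) (𝓝[≥] 0) (𝓝 (u : ℂ)) :=
    (Continuous.tendsto' (by fun_prop) _ _ (by simp)).mono_left nhdsWithin_le_nhds
  have im_nonneg : ∀ᶠ ε : ℝ in 𝓝[≥] 0, (u + ε * Complex.I : ℂ) ∈ {z : ℂ | 0 ≤ z.im} := by
    filter_upwards [self_mem_nhdsWithin] with ε hε
    simpa using hε
  exact (Complex.tendsto_arg_nhdsWithin_im_nonneg_of_re_neg_of_im_zero
    (by simpa using hu) (Complex.ofReal_im u)).comp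
      (tendsto_nhdsWithin_iff.2 ⟨tendsto_add, im_nonneg⟩)

lemma tendsto_arg_add_mul_I_of_pos {u : ℝ} (hu : 0 < u) :
    Tendsto (fun ε : ℝ => (u + ε * Complex.I : ℂ).arg) (𝓝 0) (𝓝 0) := by
  have tendsto_add : Tendsto (fun ε : ℝ => (u + ε * Complex.I : ℂ)) (𝓝 0) (𝓝 (u : ℂ)) :=
    Continuous.tendsto' (by fun_prop) _ _ (by simp)
  have arg_continuousAt := Complex.continuousAt_arg (Complex.ofReal_mem_slitPlane.2 hu)
  simpa only [Complex.arg_ofReal_of_nonneg hu.le, Function.comp_def] using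
    arg_continuousAt.tendsto.comp tendsto_add

/-- The difference of the principal logarithm at height `ε` below and above the real point `u`.
Its limit as `ε → 0⁺` is the variation of the logarithm across its cut. -/
noncomputable def logCutJump (ε u : ℝ) : ℂ :=
  Complex.log (u - ε * Complex.I) - Complex.log (u + ε * Complex.I)

lemma measurable_logCutJump (ε : ℝ) : Measurable (logCutJump ε) := by
  unfold logCutJump
  fun_prop

lemma logCutJump_eq_arg {ε : ℝ} (hε : 0 < ε) (u : ℝ) :
    logCutJump ε u = -2 * (u + ε * Complex.I : ℂ).arg * Complex.I := by
  have arg_ne_pi : (u + ε * Complex.I : ℂ).arg ≠ Real.pi := fun h =>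
    hε.ne' (by simpa using (Complex.arg_eq_pi_iff.1 h).2)
  rw [← log_conj_sub_log arg_ne_pi, logCutJump]
  simp [sub_eq_add_neg]

lemma norm_logCutJump_le {ε : ℝ} (hε : 0 < ε) (u : ℝ) : ‖logCutJump ε u‖ ≤ 2 * Real.pi := by
  have arg_le := Complex.abs_arg_le_pi (u + ε * Complex.I)
  simpa [logCutJump_eq_arg hε] using arg_le

lemma tendsto_logCutJump {u : ℝ} (hu : u ≠ 0) :
    Tendsto (fun ε => logCutJump ε u) (𝓝[>] 0)
      (𝓝 (if u < 0 then -2 * Real.pi * Complex.I else 0)) := by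
  have tendsto_arg : Tendsto (fun ε : ℝ => (u + ε * Complex.I : ℂ).arg) (𝓝[>] 0)
      (𝓝 (if u < 0 then Real.pi else 0)) := by
    split_ifs with h
    · exact (tendsto_arg_add_mul_I_of_neg h).mono_left (nhdsWithin_mono _ Set.Ioi_subset_Ici_self)
    · exact (tendsto_arg_add_mul_I_of_pos (lt_of_le_of_ne (not_lt.1 h) hu.symm)).mono_left
        nhdsWithin_le_nhds
  have limit_eq : (if u < 0 then -2 * Real.pi * Complex.I else 0 : ℂ) =
      -2 * ((if u < 0 then Real.pi else 0 : ℝ) : ℂ) * Complex.I := by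
    split_ifs <;> simp
  rw [limit_eq]
  refine ((tendsto_arg.ofReal.const_mul (-2)).mul_const Complex.I).congr' ?_
  filter_upwards [self_mem_nhdsWithin] with ε hε using (logCutJump_eq_arg hε u).symm

theorem tendsto_integral_logCutJump_smul {α E : Type*} [MeasurableSpace α] [NormedAddCommGroup E]
    [NormedSpace ℂ E] {μ : Measure α} {g : α → ℝ} {f : α → E} (hg : Measurable g)
    (hg₀ : ∀ᵐ x ∂μ, g x ≠ 0) (hf : Integrable f μ) :
    Tendsto (fun ε => ∫ x, logCutJump ε (g x) • f x ∂μ) (𝓝[>] 0)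
      (𝓝 ((-2 * Real.pi * Complex.I) • ∫ x in {x | g x < 0}, f x ∂μ)) := by
  have integral_step : (-2 * Real.pi * Complex.I) • ∫ x in {x | g x < 0}, f x ∂μ =
      ∫ x, (if g x < 0 then -2 * Real.pi * Complex.I else 0) • f x ∂μ := by
    rw [← integral_smul, ← integral_indicator (measurableSet_lt hg measurable_const)]
    simp only [Set.indicator_apply, Set.mem_ofPred_eq, ite_smul, zero_smul]
  rw [integral_step]
  refine tendsto_integral_filter_of_dominated_convergence (fun x => 2 * Real.pi * ‖f x‖)
    ?measurable ?bound (hf.norm.const_mul _) ?limit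
  case measurable =>
    exact .of_forall fun ε =>
      ((measurable_logCutJump ε).comp hg).aestronglyMeasurable.smul hf.aestronglyMeasurable
  case bound =>
    filter_upwards [self_mem_nhdsWithin] with ε hε
    refine .of_forall fun x => ?_
    rw [norm_smul]
    gcongr
    exact norm_logCutJump_le hε (g x)
  case limit =>
    filter_upwards [hg₀] with x hx using (tendsto_logCutJump hx).smul_const (f x)

lemma integrable_cexp_neg_sq_div {b : ℂ} (hb : 0 < (1 / b).re) :
    Integrable (fun x : ℝ => Complex.exp (-(x : ℂ) ^ 2 / b)) := by
  convert integrable_cexp_neg_mul_sq hb using 3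
  ring

/-- paper's Example 4: branch-cut jump of the logarithmic Cauchy data against
the Gaussian kernel:
`lim_{ε→0⁺} ∫₀^∞ e^{-x²/(4t)}·(Log(x₀-x-iε) - Log(x₀-x+iε)) dx = -2πi·∫_{x₀}^∞ e^{-x²/(4t)} dx`. -/
theorem stmt_8 (x₀ : ℝ) (hx₀ : 0 < x₀) (t : ℂ) (ht : 0 < (1 / (4 * t)).re) :
    Filter.Tendsto
      (fun ε : ℝ => ∫ x in Set.Ioi (0 : ℝ),
        Complex.exp (-(x : ℂ) ^ 2 / (4 * t)) *
          (Complex.log ((x₀ : ℂ) - (x : ℂ) - ε * Complex.I)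
            - Complex.log ((x₀ : ℂ) - (x : ℂ) + ε * Complex.I)))
      (nhdsWithin 0 (Set.Ioi 0))
      (nhds (-2 * Real.pi * Complex.I *
        ∫ x in Set.Ioi x₀, Complex.exp (-(x : ℂ) ^ 2 / (4 * t)))) := by
  have ae_ne : ∀ᵐ x ∂volume.restrict (Set.Ioi (0 : ℝ)), x₀ - x ≠ 0 := by
    filter_upwards [Measure.ae_ne _ x₀] with x hx using sub_ne_zero.2 hx.symm
  have beyond_branch_point : {x | x₀ - x < 0} ∩ Set.Ioi 0 = Set.Ioi x₀ := by
    ext x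
    simpa using hx₀.trans
  have tendsto_jump := tendsto_integral_logCutJump_smul (g := (x₀ - ·)) (by fun_prop) ae_ne
    (integrable_cexp_neg_sq_div ht).integrableOn
  rw [Measure.restrict_restrict (measurableSet_lt (by fun_prop) measurable_const),
    beyond_branch_point] at tendsto_jump
  simpa only [logCutJump, smul_eq_mul, mul_comm (Complex.exp _), Complex.ofReal_sub]
    using tendsto_jump
end

section
/- Let x₀ > 0, let λ be a real number with λ > −1 and λ ∉ ℤ, and let t ∈ ℂ with Re(1/(4t)) > 0. Then lim_{ε→0⁺} ∫₀^∞ exp(−x²/(4t))·((x₀ − x − iε)^λ − (x₀ − x + iε)^λ) dx = −2i·sin(πλ)·∫_{x₀}^∞ exp(−x²/(4t))·(x − x₀)^λ dx, where w^λ denotes the principal branch of the complex power. -/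
open MeasureTheory Filter

/-!
Across a positive point of the real axis `z ^ w` is continuous, so the gap between its values just
below and just above the axis tends to zero. At `-u < 0` the two one-sided limits of `log` are
`log u ∓ π * I`, so the gap tends to
`u ^ w * (exp (-(π * I * w)) - exp (π * I * w)) = -2 * I * sin (π * w) * u ^ w`. The passage to the
limit under the integral is dominated convergence: for `|ε| ≤ 1` the norm of `(u + ε * I) ^ w` is at
most a constant times `|u| ^ w.re + 1`, which is integrable against a Gaussian since `-1 < w.re`.
-/

open scoped Topology

lemma tendsto_cpow_of_tendsto_log {u : ℝ} (hu : 0 < u) {θ : ℂ} {l : Filter ℂ}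
    (hlog : Tendsto Complex.log l (𝓝 (Real.log u + θ))) (hne : ∀ᶠ z in l, z ≠ 0) (w : ℂ) :
    Tendsto (fun z => z ^ w) l (𝓝 ((u : ℂ) ^ w * Complex.exp (θ * w))) := by
  rw [Complex.cpow_def_of_ne_zero (Complex.ofReal_ne_zero.mpr hu.ne'), ← Complex.ofReal_log hu.le,
    ← Complex.exp_add, ← add_mul]
  refine (hlog.mul_const w).cexp.congr' ?_
  filter_upwards [hne] with z hz using (Complex.cpow_def_of_ne_zero hz w).symm

lemma tendsto_cpow_nhdsWithin_im_neg {u : ℝ} (hu : 0 < u) (w : ℂ) :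
    Tendsto (fun z : ℂ => z ^ w) (𝓝[{z | z.im < 0}] (-u : ℂ))
      (𝓝 ((u : ℂ) ^ w * Complex.exp (-(Real.pi * Complex.I * w)))) := by
  rw [← neg_mul]
  refine tendsto_cpow_of_tendsto_log hu ?_
    (eventually_nhdsWithin_of_eventually_nhds (eventually_ne_nhds (by simpa using hu.ne'))) w
  simpa [abs_of_pos hu, sub_eq_add_neg] using
    Complex.tendsto_log_nhdsWithin_im_neg_of_re_neg_of_im_zero (z := -u) (by simpa) (by simp)

lemma tendsto_cpow_nhdsWithin_im_nonneg {u : ℝ} (hu : 0 < u) (w : ℂ) :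
    Tendsto (fun z : ℂ => z ^ w) (𝓝[{z | 0 ≤ z.im}] (-u : ℂ))
      (𝓝 ((u : ℂ) ^ w * Complex.exp (Real.pi * Complex.I * w))) := by
  refine tendsto_cpow_of_tendsto_log hu ?_
    (eventually_nhdsWithin_of_eventually_nhds (eventually_ne_nhds (by simpa using hu.ne'))) w
  simpa [abs_of_pos hu] using
    Complex.tendsto_log_nhdsWithin_im_nonneg_of_re_neg_of_im_zero (z := -u) (by simpa) (by simp)

lemma exp_neg_pi_mul_I_mul_sub_exp_pi_mul_I_mul (w : ℂ) :
    Complex.exp (-(Real.pi * Complex.I * w)) - Complex.exp (Real.pi * Complex.I * w) =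
      -2 * Complex.I * Complex.sin (Real.pi * w) := by
  have hsin := Complex.two_sin (Real.pi * w)
  rw [show Real.pi * Complex.I * w = Real.pi * w * Complex.I by ring, ← neg_mul]
  linear_combination Complex.I * hsin + (Complex.exp (-(Real.pi * w) * Complex.I) -
      Complex.exp (Real.pi * w * Complex.I)) * Complex.I_sq

lemma tendsto_sub_mul_I_nhdsGT_zero (z : ℂ) :
    Tendsto (fun ε : ℝ => z - ε * Complex.I) (𝓝[>] 0) (𝓝[{v | v.im < z.im}] z) := by
  refine tendsto_nhdsWithin_iff.mpr ⟨tendsto_nhdsWithin_of_tendsto_nhds ?_, ?_⟩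
  · exact Continuous.tendsto' (by fun_prop) _ _ (by simp)
  · filter_upwards [self_mem_nhdsWithin] with ε hε using by simpa using hε

lemma tendsto_add_mul_I_nhdsGT_zero (z : ℂ) :
    Tendsto (fun ε : ℝ => z + ε * Complex.I) (𝓝[>] 0) (𝓝[{v | z.im ≤ v.im}] z) := by
  refine tendsto_nhdsWithin_iff.mpr ⟨tendsto_nhdsWithin_of_tendsto_nhds ?_, ?_⟩
  · exact Continuous.tendsto' (by fun_prop) _ _ (by simp)
  · filter_upwards [self_mem_nhdsWithin] with ε hε using by simpa using (Set.mem_Ioi.mp hε).le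

lemma tendsto_cpow_sub_cpow_of_mem_slitPlane {z : ℂ} (hz : z ∈ Complex.slitPlane) (w : ℂ) :
    Tendsto (fun ε : ℝ => (z - ε * Complex.I) ^ w - (z + ε * Complex.I) ^ w) (𝓝[>] 0) (𝓝 0) := by
  have hcont : Tendsto (fun v : ℂ => v ^ w) (𝓝 z) (𝓝 (z ^ w)) :=
    continuousAt_id.cpow continuousAt_const hz
  have hbelow := hcont.comp (tendsto_sub_mul_I_nhdsGT_zero z |>.mono_right nhdsWithin_le_nhds)
  have habove := hcont.comp (tendsto_add_mul_I_nhdsGT_zero z |>.mono_right nhdsWithin_le_nhds)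
  simpa only [sub_self, Function.comp_def] using hbelow.sub habove

lemma tendsto_cpow_sub_cpow_neg_ofReal {u : ℝ} (hu : 0 < u) (w : ℂ) :
    Tendsto (fun ε : ℝ => (-u - ε * Complex.I) ^ w - (-u + ε * Complex.I) ^ w) (𝓝[>] 0)
      (𝓝 (-2 * Complex.I * Complex.sin (Real.pi * w) * (u : ℂ) ^ w)) := by
  have him : (-u : ℂ).im = 0 := by simp
  have hbelow := (tendsto_cpow_nhdsWithin_im_neg hu w).comp
    (him ▸ tendsto_sub_mul_I_nhdsGT_zero (-u : ℂ))
  have habove := (tendsto_cpow_nhdsWithin_im_nonneg hu w).comp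
    (him ▸ tendsto_add_mul_I_nhdsGT_zero (-u : ℂ))
  rw [← exp_neg_pi_mul_I_mul_sub_exp_pi_mul_I_mul, mul_comm, mul_sub]
  exact hbelow.sub habove

lemma norm_cpow_le_exp_mul_rpow (z w : ℂ) :
    ‖z ^ w‖ ≤ Real.exp (Real.pi * |w.im|) * ‖z‖ ^ w.re := by
  have harg : -(z.arg * w.im) ≤ Real.pi * |w.im| :=
    calc -(z.arg * w.im) ≤ |z.arg| * |w.im| := by rw [← abs_mul]; exact neg_le_abs _
      _ ≤ Real.pi * |w.im| := by gcongr; exact Complex.abs_arg_le_pi z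
  calc ‖z ^ w‖ ≤ ‖z‖ ^ w.re / Real.exp (z.arg * w.im) := Complex.norm_cpow_le z w
    _ = Real.exp (-(z.arg * w.im)) * ‖z‖ ^ w.re := by rw [Real.exp_neg, div_eq_inv_mul]
    _ ≤ _ := by gcongr

lemma rpow_le_two_rpow_abs_mul_of_mem_Icc {a b : ℝ} (ha : 0 < a) (hb : b ∈ Set.Icc a (a + 1))
    (r : ℝ) : b ^ r ≤ 2 ^ |r| * (a ^ r + 1) := by
  have hone : (1 : ℝ) ≤ 2 ^ |r| := Real.one_le_rpow one_le_two (abs_nonneg r)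
  have har : 0 < a ^ r := Real.rpow_pos_of_pos ha r
  rcases le_total 0 r with hr | hr
  · have hmax : max a 1 ^ r ≤ a ^ r + 1 := by
      rw [Real.rpow_max ha.le zero_le_one hr, Real.one_rpow]
      exact max_le_add_of_nonneg har.le zero_le_one
    calc b ^ r ≤ (2 * max a 1) ^ r := by
          gcongr
          · exact ha.le.trans hb.1
          · linarith [hb.2, le_max_left a 1, le_max_right a 1]
      _ = 2 ^ |r| * max a 1 ^ r := by
          rw [Real.mul_rpow zero_le_two (by positivity), abs_of_nonneg hr]
      _ ≤ 2 ^ |r| * (a ^ r + 1) := by gcongr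
  · calc b ^ r ≤ a ^ r := Real.rpow_le_rpow_of_nonpos ha hb.1 hr
      _ ≤ 1 * (a ^ r + 1) := by linarith
      _ ≤ 2 ^ |r| * (a ^ r + 1) := by gcongr

lemma norm_cpow_add_mul_I_le {u ε : ℝ} (hu : u ≠ 0) (hε : |ε| ≤ 1) (w : ℂ) :
    ‖(u + ε * Complex.I) ^ w‖ ≤
      Real.exp (Real.pi * |w.im|) * 2 ^ |w.re| * (|u| ^ w.re + 1) := by
  have hle : |u| ≤ ‖(u + ε * Complex.I : ℂ)‖ := by
    simpa using Complex.abs_re_le_norm (u + ε * Complex.I)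
  have hge : ‖(u + ε * Complex.I : ℂ)‖ ≤ |u| + 1 :=
    (norm_add_le _ _).trans (by simpa using hε)
  rw [mul_assoc]
  exact (norm_cpow_le_exp_mul_rpow _ w).trans <| by
    gcongr
    exact rpow_le_two_rpow_abs_mul_of_mem_Icc (abs_pos.mpr hu) ⟨hle, hge⟩ w.re

lemma norm_cpow_sub_cpow_le {u ε : ℝ} (hu : u ≠ 0) (hε : |ε| ≤ 1) (w : ℂ) :
    ‖(u - ε * Complex.I) ^ w - (u + ε * Complex.I) ^ w‖ ≤
      2 * Real.exp (Real.pi * |w.im|) * 2 ^ |w.re| * (|u| ^ w.re + 1) := by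
  have hbelow := norm_cpow_add_mul_I_le hu (abs_neg ε ▸ hε) w
  rw [Complex.ofReal_neg, neg_mul, ← sub_eq_add_neg] at hbelow
  linarith [norm_sub_le ((u - ε * Complex.I : ℂ) ^ w) ((u + ε * Complex.I) ^ w),
    norm_cpow_add_mul_I_le hu hε w]

theorem tendsto_integral_mul_cpow_sub_cpow {μ : Measure ℝ} {f : ℝ → ℂ} {a : ℝ} {w : ℂ}
    (ha : ∀ᵐ x ∂μ, x ≠ a) (hf : Integrable f μ)
    (hfw : Integrable (fun x => |x - a| ^ w.re * ‖f x‖) μ) :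
    Tendsto
      (fun ε : ℝ => ∫ x, f x *
        (((a : ℂ) - x - ε * Complex.I) ^ w - ((a : ℂ) - x + ε * Complex.I) ^ w) ∂μ)
      (𝓝[>] 0)
      (𝓝 (-2 * Complex.I * Complex.sin (Real.pi * w) *
        ∫ x in Set.Ioi a, f x * ((x - a : ℝ) : ℂ) ^ w ∂μ)) := by
  rw [← integral_const_mul, ← integral_indicator measurableSet_Ioi]
  refine tendsto_integral_filter_of_dominated_convergence
    (fun x => 2 * Real.exp (Real.pi * |w.im|) * 2 ^ |w.re| * (|x - a| ^ w.re * ‖f x‖ + ‖f x‖))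
    (Eventually.of_forall fun ε => hf.aestronglyMeasurable.mul
      (Measurable.aestronglyMeasurable (by fun_prop)))
    ?_ ((hfw.add hf.norm).const_mul _) ?_
  · filter_upwards [Ioc_mem_nhdsGT (zero_lt_one' ℝ)] with ε hε
    filter_upwards [ha] with x hx
    have hbound := norm_cpow_sub_cpow_le (sub_ne_zero.mpr hx.symm)
      (abs_le.mpr ⟨by linarith [hε.1], hε.2⟩) w
    rw [Complex.ofReal_sub, abs_sub_comm] at hbound
    rw [norm_mul]
    exact (mul_le_mul_of_nonneg_left hbound (norm_nonneg _)).trans_eq (by ring)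
  · filter_upwards [ha] with x hx
    rcases hx.lt_or_gt with hxa | hxa
    · rw [Set.indicator_of_notMem (Set.notMem_Ioi.mpr hxa.le)]
      have hslit : (a - x : ℂ) ∈ Complex.slitPlane := by
        exact_mod_cast Complex.ofReal_mem_slitPlane.mpr (sub_pos.mpr hxa)
      simpa only [mul_zero] using
        (tendsto_cpow_sub_cpow_of_mem_slitPlane hslit w).const_mul (f x)
    · rw [Set.indicator_of_mem (Set.mem_Ioi.mpr hxa), mul_left_comm]
      have hjump := (tendsto_cpow_sub_cpow_neg_ofReal (sub_pos.mpr hxa) w).const_mul (f x)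
      simpa only [Complex.ofReal_sub, neg_sub] using hjump

lemma integrable_comp_abs {E : Type*} [NormedAddCommGroup E] {f : ℝ → E}
    (hf : IntegrableOn f (Set.Ioi 0)) : Integrable fun x => f |x| := by
  have hpos : IntegrableOn (fun x => f |x|) (Set.Ioi 0) :=
    hf.congr_fun (fun x hx => by rw [abs_of_pos hx]) measurableSet_Ioi
  have hneg : IntegrableOn (fun x => f |x|) (Set.Iic 0) := by
    rw [← (Measure.measurePreserving_neg volume).integrableOn_comp_preimage
      (Homeomorph.neg ℝ).measurableEmbedding]
    simpa [Function.comp_def, integrableOn_Ici_iff_integrableOn_Ioi] using hpos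
  rw [← integrableOn_univ, ← Set.Iic_union_Ioi (a := (0 : ℝ))]
  exact hneg.union hpos

lemma integrable_abs_sub_rpow_mul_exp_neg_mul_sq {b : ℝ} (hb : 0 < b) {r : ℝ} (hr : -1 < r)
    (a : ℝ) : Integrable fun x : ℝ => |x - a| ^ r * Real.exp (-b * x ^ 2) := by
  have hcentred : Integrable fun x : ℝ => |x - a| ^ r * Real.exp (-(b / 2) * (x - a) ^ 2) := by
    simpa only [sq_abs] using (integrable_comp_abs
      (integrableOn_rpow_mul_exp_neg_mul_sq (half_pos hb) hr)).comp_sub_right a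
  refine (hcentred.const_mul (Real.exp (b * a ^ 2))).mono'
    (Measurable.aestronglyMeasurable (by fun_prop)) (Eventually.of_forall fun x => ?_)
  have hexp : Real.exp (-b * x ^ 2) ≤
      Real.exp (b * a ^ 2) * Real.exp (-(b / 2) * (x - a) ^ 2) := by
    rw [← Real.exp_add, Real.exp_le_exp]
    have hsq : (x - a) ^ 2 ≤ 2 * (x ^ 2 + a ^ 2) := by linarith [sq_nonneg (x + a)]
    linarith [mul_le_mul_of_nonneg_left hsq hb.le]
  rw [Real.norm_of_nonneg (by positivity), mul_left_comm]
  gcongr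

theorem stmt_9_general (s : Set ℝ) (a : ℝ) {w : ℂ} (hw : -1 < w.re) {t : ℂ}
    (ht : 0 < (1 / (4 * t)).re) :
    Tendsto
      (fun ε : ℝ => ∫ x in s, Complex.exp (-(x : ℂ) ^ 2 / (4 * t)) *
        (((a : ℂ) - x - ε * Complex.I) ^ w - ((a : ℂ) - x + ε * Complex.I) ^ w))
      (𝓝[>] 0)
      (𝓝 (-2 * Complex.I * Complex.sin (Real.pi * w) *
        ∫ x in Set.Ioi a ∩ s, Complex.exp (-(x : ℂ) ^ 2 / (4 * t)) * ((x - a : ℝ) : ℂ) ^ w)) := by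
  have hkernel : ∀ x : ℝ, -(x : ℂ) ^ 2 / (4 * t) = -(1 / (4 * t)) * (x : ℂ) ^ 2 :=
    fun x => by ring
  simp only [hkernel, ← Measure.restrict_restrict measurableSet_Ioi]
  refine tendsto_integral_mul_cpow_sub_cpow (Measure.ae_ne _ a)
    (integrable_cexp_neg_mul_sq ht).integrableOn ?_
  simp only [norm_cexp_neg_mul_sq]
  exact (integrable_abs_sub_rpow_mul_exp_neg_mul_sq ht hw a).integrableOn

/-- paper's Example 5: branch-cut jump of the power Cauchy data `(·)^λ`,
`λ > -1`, `λ ∉ ℤ`, against the Gaussian kernel: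
`lim_{ε→0⁺} ∫₀^∞ e^{-x²/(4t)}·((x₀-x-iε)^λ - (x₀-x+iε)^λ) dx
  = -2i·sin(πλ)·∫_{x₀}^∞ e^{-x²/(4t)}·(x-x₀)^λ dx`. -/
theorem stmt_9 (x₀ : ℝ) (hx₀ : 0 < x₀) (lam : ℝ) (hlam1 : -1 < lam)
    (hlam2 : ∀ m : ℤ, lam ≠ (m : ℝ)) (t : ℂ) (ht : 0 < (1 / (4 * t)).re) :
    Filter.Tendsto
      (fun ε : ℝ => ∫ x in Set.Ioi (0 : ℝ),
        Complex.exp (-(x : ℂ) ^ 2 / (4 * t)) *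
          (((x₀ : ℂ) - (x : ℂ) - ε * Complex.I) ^ (lam : ℂ)
            - ((x₀ : ℂ) - (x : ℂ) + ε * Complex.I) ^ (lam : ℂ)))
      (nhdsWithin 0 (Set.Ioi 0))
      (nhds (-2 * Complex.I * (Real.sin (Real.pi * lam) : ℂ) *
        ∫ x in Set.Ioi x₀,
          Complex.exp (-(x : ℂ) ^ 2 / (4 * t)) * ((x - x₀) ^ lam : ℝ))) := by
  have hjump := stmt_9_general (Set.Ioi 0) x₀ (w := lam) (by simpa) ht
  rw [Set.inter_eq_left.mpr (Set.Ioi_subset_Ioi hx₀.le)] at hjump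
  convert hjump using 3
  · push_cast; rfl
  · refine setIntegral_congr_fun measurableSet_Ioi fun x hx => ?_
    simp only [Complex.ofReal_cpow (sub_pos.mpr hx).le]
end
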